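/- Let φ = φ(x) be an S5_FOL formula with one free variable that is bisimulation invariant and ℓ-local. Then φ is ≈_{2ℓ+1}-invariant: if I,w,d ≈_{2ℓ+1} J,v,e then I,w,d ⊨ φ if and only if J,v,e ⊨ φ. -/

import Mathlib

/-! Core definitions: S5-interpretations, S5^loc_ALC concepts, S5_FOL formulas,
    bisimulations, games, Gaifman locality, unravellings, normal forms,
    and the two-sorted correspondence language. -/

/-- An S5-interpretation: nonempty sets of worlds and individuals, and for each
world an ALC interpretation of concept and role names. -/
structure S5Interp (NC NR : Type) : Type 1 where
  W : Type
  Δ : Type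
  W_nonempty : Nonempty W
  Δ_nonempty : Nonempty Δ
  conc : NC → W → Set Δ
  role : NR → W → Set (Δ × Δ)

variable {NC NR : Type}

/-- Concepts of S5^loc_ALC : C ::= A | ¬C | C ⊓ D | ∃r.C | □C. -/
inductive DLConcept (NC NR : Type) : Type where
  | atom : NC → DLConcept NC NR
  | neg  : DLConcept NC NR → DLConcept NC NR
  | and  : DLConcept NC NR → DLConcept NC NR → DLConcept NC NR
  | ex   : NR → DLConcept NC NR → DLConcept NC NR
  | box  : DLConcept NC NR → DLConcept NC NR

/-- ◇C := ¬□¬C. -/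
def DLConcept.dia (C : DLConcept NC NR) : DLConcept NC NR := .neg (.box (.neg C))

/-- Satisfaction I,w,d ⊨ C. -/
def DLConcept.Sat (I : S5Interp NC NR) : I.W → I.Δ → DLConcept NC NR → Prop
  | w, d, .atom A  => d ∈ I.conc A w
  | w, d, .neg C   => ¬ DLConcept.Sat I w d C
  | w, d, .and C D => DLConcept.Sat I w d C ∧ DLConcept.Sat I w d D
  | w, d, .ex r C  => ∃ e, (d, e) ∈ I.role r w ∧ DLConcept.Sat I w e C
  | _, d, .box C   => ∀ v, DLConcept.Sat I v d C

/-- Rank of a concept: maximal nesting depth of □ and ∃r. -/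
def DLConcept.rank : DLConcept NC NR → ℕ
  | .atom _  => 0
  | .neg C   => C.rank
  | .and C D => max C.rank D.rank
  | .ex _ C  => C.rank + 1
  | .box C   => C.rank + 1

/-- Formulas of S5-modalized first-order logic over the correspondence
language (variables are natural numbers). -/
inductive FOForm (NC NR : Type) : Type where
  | conc : NC → ℕ → FOForm NC NR
  | role : NR → ℕ → ℕ → FOForm NC NR
  | eq   : ℕ → ℕ → FOForm NC NR
  | neg  : FOForm NC NR → FOForm NC NR
  | and  : FOForm NC NR → FOForm NC NR → FOForm NC NR
  | ex   : ℕ → FOForm NC NR → FOForm NC NR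
  | box  : FOForm NC NR → FOForm NC NR

/-- Satisfaction I,w,η ⊨ φ for S5_FOL. -/
def FOForm.Sat (I : S5Interp NC NR) : I.W → (ℕ → I.Δ) → FOForm NC NR → Prop
  | w, η, .conc A x   => η x ∈ I.conc A w
  | w, η, .role r x y => (η x, η y) ∈ I.role r w
  | _, η, .eq x y     => η x = η y
  | w, η, .neg φ      => ¬ FOForm.Sat I w η φ
  | w, η, .and φ ψ    => FOForm.Sat I w η φ ∧ FOForm.Sat I w η ψ
  | w, η, .ex x φ     => ∃ d, FOForm.Sat I w (Function.update η x d) φ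
  | _, η, .box φ      => ∀ v, FOForm.Sat I v η φ

/-- Rank of a formula: maximal nesting depth of □ and ∃. -/
def FOForm.rank : FOForm NC NR → ℕ
  | .conc _ _   => 0
  | .role _ _ _ => 0
  | .eq _ _     => 0
  | .neg φ      => φ.rank
  | .and φ ψ    => max φ.rank ψ.rank
  | .ex _ φ     => φ.rank + 1
  | .box φ      => φ.rank + 1

/-- Free variables of a formula. -/
def FOForm.freeVars : FOForm NC NR → Set ℕ
  | .conc _ x   => {x}
  | .role _ x y => {x, y}
  | .eq x y     => {x, y}
  | .neg φ      => φ.freeVars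
  | .and φ ψ    => φ.freeVars ∪ ψ.freeVars
  | .ex x φ     => φ.freeVars \ {x}
  | .box φ      => φ.freeVars

/-- The standard translation ST_x, using x+1 as the fresh variable for
existential restrictions. -/
def standardTranslation : ℕ → DLConcept NC NR → FOForm NC NR
  | x, .atom A  => .conc A x
  | x, .neg C   => .neg (standardTranslation x C)
  | x, .and C D => .and (standardTranslation x C) (standardTranslation x D)
  | x, .ex r C  => .ex (x+1) (.and (.role r x (x+1)) (standardTranslation (x+1) C))
  | x, .box C   => .box (standardTranslation x C)

/-- Bisimulations between S5-interpretations. -/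
def IsBisimulation (I J : S5Interp NC NR)
    (R : (I.W × I.Δ) → (J.W × J.Δ) → Prop) : Prop :=
  ∀ w d v e, R (w, d) (v, e) →
    (∀ A : NC, d ∈ I.conc A w ↔ e ∈ J.conc A v) ∧
    (∀ w', ∃ v', R (w', d) (v', e)) ∧
    (∀ v', ∃ w', R (w', d) (v', e)) ∧
    (∀ (r : NR) d', (d, d') ∈ I.role r w → ∃ e', (e, e') ∈ J.role r v ∧ R (w, d') (v, e')) ∧
    (∀ (r : NR) e', (e, e') ∈ J.role r v → ∃ d', (d, d') ∈ I.role r w ∧ R (w, d') (v, e'))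

/-- I,w,d ≈ J,v,e : some bisimulation relates (w,d) and (v,e). -/
def Bisimilar (I J : S5Interp NC NR) (w : I.W) (d : I.Δ) (v : J.W) (e : J.Δ) : Prop :=
  ∃ R, IsBisimulation I J R ∧ R (w, d) (v, e)

/-- Depth-n bisimilarity ≈ₙ (Duplicator wins the n-round bisimulation game). -/
def BisimAtDepth (I J : S5Interp NC NR) : ℕ → I.W → I.Δ → J.W → J.Δ → Prop
  | 0, w, d, v, e => ∀ A : NC, d ∈ I.conc A w ↔ e ∈ J.conc A v
  | n+1, w, d, v, e =>
      (∀ A : NC, d ∈ I.conc A w ↔ e ∈ J.conc A v) ∧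
      (∀ w', ∃ v', BisimAtDepth I J n w' d v' e) ∧
      (∀ v', ∃ w', BisimAtDepth I J n w' d v' e) ∧
      (∀ (r : NR) d', (d, d') ∈ I.role r w →
        ∃ e', (e, e') ∈ J.role r v ∧ BisimAtDepth I J n w d' v e') ∧
      (∀ (r : NR) e', (e, e') ∈ J.role r v →
        ∃ d', (d, d') ∈ I.role r w ∧ BisimAtDepth I J n w d' v e')

/-- Atomic agreement of two configurations. -/
def AltAtom (I J : S5Interp NC NR) (w : I.W) (d : I.Δ) (v : J.W) (e : J.Δ) : Prop :=
  ∀ A : NC, d ∈ I.conc A w ↔ e ∈ J.conc A v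

/-- One pair of Δ-moves (in either interpretation), continuing with `P`. -/
def AltDelta (I J : S5Interp NC NR) (P : I.W → I.Δ → J.W → J.Δ → Prop)
    (w : I.W) (d : I.Δ) (v : J.W) (e : J.Δ) : Prop :=
  (∀ (r : NR) d', (d, d') ∈ I.role r w → ∃ e', (e, e') ∈ J.role r v ∧ P w d' v e') ∧
  (∀ (r : NR) e', (e, e') ∈ J.role r v → ∃ d', (d, d') ∈ I.role r w ∧ P w d' v e')

/-- Duplicator wins the n-round alternating bisimulation game (each round:
an optional pair of W-moves followed by a mandatory pair of Δ-moves; one extra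
optional pair of W-moves may be played at the very end). -/
def AltBisim (I J : S5Interp NC NR) : ℕ → I.W → I.Δ → J.W → J.Δ → Prop
  | 0, w, d, v, e =>
      AltAtom I J w d v e ∧
      (∀ w', ∃ v', AltAtom I J w' d v' e) ∧
      (∀ v', ∃ w', AltAtom I J w' d v' e)
  | n+1, w, d, v, e =>
      AltAtom I J w d v e ∧
      AltDelta I J (AltBisim I J n) w d v e ∧
      (∀ w', ∃ v', AltAtom I J w' d v' e ∧ AltDelta I J (AltBisim I J n) w' d v' e) ∧
      (∀ v', ∃ w', AltAtom I J w' d v' e ∧ AltDelta I J (AltBisim I J n) w' d v' e)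

/-- Winning strategies in the unbounded alternating bisimulation game,
presented as relations closed under the game conditions. -/
def IsAltBisimulation (I J : S5Interp NC NR)
    (R : (I.W × I.Δ) → (J.W × J.Δ) → Prop) : Prop :=
  ∀ w d v e, R (w, d) (v, e) →
    AltAtom I J w d v e ∧
    AltDelta I J (fun w' d' v' e' => R (w', d') (v', e')) w d v e ∧
    (∀ w', ∃ v', AltAtom I J w' d v' e ∧
      AltDelta I J (fun a b c f => R (a, b) (c, f)) w' d v' e) ∧
    (∀ v', ∃ w', AltAtom I J w' d v' e ∧
      AltDelta I J (fun a b c f => R (a, b) (c, f)) w' d v' e)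

/-- I,w,d ≈^alt J,v,e : Duplicator wins the unbounded alternating game. -/
def AltBisimilar (I J : S5Interp NC NR) (w : I.W) (d : I.Δ) (v : J.W) (e : J.Δ) : Prop :=
  ∃ R, IsAltBisimulation I J R ∧ R (w, d) (v, e)

/-- Partial isomorphism between configurations of the S5-Ehrenfeucht–Fraïssé game. -/
def PartialIso (I J : S5Interp NC NR) {k : ℕ} (w : I.W) (v : J.W)
    (ds : Fin k → I.Δ) (es : Fin k → J.Δ) : Prop :=
  (∀ i j, ds i = ds j ↔ es i = es j) ∧
  (∀ (A : NC) i, ds i ∈ I.conc A w ↔ es i ∈ J.conc A v) ∧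
  (∀ (r : NR) i j, (ds i, ds j) ∈ I.role r w ↔ (es i, es j) ∈ J.role r v)

/-- S5-Ehrenfeucht–Fraïssé equivalence up to depth n (Duplicator wins the
n-round EF game). -/
def EFEquiv (I J : S5Interp NC NR) :
    ℕ → (k : ℕ) → I.W → (Fin k → I.Δ) → J.W → (Fin k → J.Δ) → Prop
  | 0, _, w, ds, v, es => PartialIso I J w v ds es
  | n+1, k, w, ds, v, es =>
      PartialIso I J w v ds es ∧
      (∀ w', ∃ v', EFEquiv I J n k w' ds v' es) ∧
      (∀ v', ∃ w', EFEquiv I J n k w' ds v' es) ∧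
      (∀ d, ∃ e, EFEquiv I J n (k+1) w (Fin.snoc ds d) v (Fin.snoc es e)) ∧
      (∀ e, ∃ d, EFEquiv I J n (k+1) w (Fin.snoc ds d) v (Fin.snoc es e))

/-- Adjacency in the Gaifman graph of an S5-interpretation. -/
def GaifmanAdj (I : S5Interp NC NR) (d e : I.Δ) : Prop :=
  d ≠ e ∧ ∃ (r : NR) (w : I.W), (d, e) ∈ I.role r w ∨ (e, d) ∈ I.role r w

/-- The radius-ℓ neighbourhood U^ℓ(d) of d in the Gaifman graph
(the set of elements at Gaifman distance at most ℓ from d). -/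
def GaifmanBall (I : S5Interp NC NR) (d : I.Δ) : ℕ → Set I.Δ
  | 0 => {d}
  | ℓ+1 => GaifmanBall I d ℓ ∪ {e | ∃ e' ∈ GaifmanBall I d ℓ, GaifmanAdj I e' e}

lemma mem_gaifmanBall_self (I : S5Interp NC NR) (d : I.Δ) (ℓ : ℕ) :
    d ∈ GaifmanBall I d ℓ := by
  induction ℓ with
  | zero => simp [GaifmanBall]
  | succ n ih => exact Set.mem_union_left _ ih

/-- Restriction I|_U of an S5-interpretation to a nonempty subset U of its domain. -/
def S5Interp.restrict (I : S5Interp NC NR) (U : Set I.Δ) (hU : U.Nonempty) :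
    S5Interp NC NR where
  W := I.W
  Δ := ↥U
  W_nonempty := I.W_nonempty
  Δ_nonempty := hU.to_subtype
  conc A w := {x | (x : I.Δ) ∈ I.conc A w}
  role r w := {p | ((p.1 : I.Δ), (p.2 : I.Δ)) ∈ I.role r w}

/-- Restriction I|_{U^ℓ(d)} to the radius-ℓ Gaifman neighbourhood of d. -/
def S5Interp.ballRestrict (I : S5Interp NC NR) (d : I.Δ) (ℓ : ℕ) : S5Interp NC NR :=
  I.restrict (GaifmanBall I d ℓ) ⟨d, mem_gaifmanBall_self I d ℓ⟩

/-- The point d viewed inside I|_{U^ℓ(d)}. -/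
def S5Interp.ballPt (I : S5Interp NC NR) (d : I.Δ) (ℓ : ℕ) : (I.ballRestrict d ℓ).Δ :=
  ⟨d, mem_gaifmanBall_self I d ℓ⟩

/-- A formula φ with (single) free variable x is ℓ-local if its truth at d only
depends on the restriction of the interpretation to U^ℓ(d). -/
def IsLocal (φ : FOForm NC NR) (x : ℕ) (ℓ : ℕ) : Prop :=
  ∀ (I : S5Interp NC NR) (w : I.W) (d : I.Δ)
    (η : ℕ → I.Δ) (θ : ℕ → (I.ballRestrict d ℓ).Δ),
    η x = d → (θ x).val = d →
    (FOForm.Sat I w η φ ↔ FOForm.Sat (I.ballRestrict d ℓ) w θ φ)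

/-- φ (with single free variable x) is bisimulation invariant. -/
def BisimInvariant (φ : FOForm NC NR) (x : ℕ) : Prop :=
  ∀ (I J : S5Interp NC NR) (w : I.W) (d : I.Δ) (v : J.W) (e : J.Δ),
    Bisimilar I J w d v e →
    ∀ (η : ℕ → I.Δ) (θ : ℕ → J.Δ), η x = d → θ x = e →
      (FOForm.Sat I w η φ ↔ FOForm.Sat J v θ φ)

/-- φ (with single free variable x) is bisimulation invariant over finite
S5-interpretations. -/
def BisimInvariantFin (φ : FOForm NC NR) (x : ℕ) : Prop :=
  ∀ (I J : S5Interp NC NR), Finite I.W → Finite I.Δ → Finite J.W → Finite J.Δ →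
    ∀ (w : I.W) (d : I.Δ) (v : J.W) (e : J.Δ),
    Bisimilar I J w d v e →
    ∀ (η : ℕ → I.Δ) (θ : ℕ → J.Δ), η x = d → θ x = e →
      (FOForm.Sat I w η φ ↔ FOForm.Sat J v θ φ)

/-- One step along some role at some world (the edge relation used in tree unravellings). -/
def roleStep (I : S5Interp NC NR) (a b : I.Δ) : Prop :=
  ∃ (r : NR) (w : I.W), (a, b) ∈ I.role r w

/-- Paths from d₀: a path (d₀,d₁,…,d_k) is encoded by its tail list (d₁,…,d_k). -/
def UPath (I : S5Interp NC NR) (d0 : I.Δ) : Type :=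
  { l : List I.Δ // List.Chain (roleStep I) d0 l }

/-- π : the last entry of a path. -/
def UPath.last {I : S5Interp NC NR} {d0 : I.Δ} (p : UPath I d0) : I.Δ :=
  (d0 :: p.val).getLast (by simp)

/-- The tree unravelling I*_{d₀}. -/
def S5Interp.unravel (I : S5Interp NC NR) (d0 : I.Δ) : S5Interp NC NR where
  W := I.W
  Δ := UPath I d0
  W_nonempty := I.W_nonempty
  Δ_nonempty := ⟨⟨[], List.Chain.nil⟩⟩
  conc A w := {p | p.last ∈ I.conc A w}
  role r w := {q | ∃ d, (q.1.last, d) ∈ I.role r w ∧ q.2.val = q.1.val ++ [d]}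

/-- Paths from d₀ of length at most ℓ. -/
def PPath (I : S5Interp NC NR) (d0 : I.Δ) (ℓ : ℕ) : Type :=
  { l : List I.Δ // List.Chain (roleStep I) d0 l ∧ l.length ≤ ℓ }

def PPath.last {I : S5Interp NC NR} {d0 : I.Δ} {ℓ : ℕ} (p : PPath I d0 ℓ) : I.Δ :=
  (d0 :: p.val).getLast (by simp)

/-- The map ρ of the partial unravelling: a surviving path goes to its last
entry, an element of the fresh copy of I to itself. -/
def punravelProj (I : S5Interp NC NR) (d0 : I.Δ) (ℓ : ℕ) :
    PPath I d0 ℓ ⊕ I.Δ → I.Δ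
  | Sum.inl p => p.last
  | Sum.inr d => d

/-- The partial unravelling of I at d₀ up to level ℓ: the tree unravelling
restricted to the radius-(ℓ+1) Gaifman neighbourhood of the root, with each
leaf path at distance ℓ+1 identified with its last entry in a fresh disjoint
copy of I. -/
def S5Interp.partialUnravel (I : S5Interp NC NR) (d0 : I.Δ) (ℓ : ℕ) :
    S5Interp NC NR where
  W := I.W
  Δ := PPath I d0 ℓ ⊕ I.Δ
  W_nonempty := I.W_nonempty
  Δ_nonempty := ⟨Sum.inl ⟨[], List.Chain.nil, Nat.zero_le _⟩⟩
  conc A w := {x | punravelProj I d0 ℓ x ∈ I.conc A w}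
  role r w := fun q =>
    match q with
    | (Sum.inl p, Sum.inl p') => ∃ d, (p.last, d) ∈ I.role r w ∧ p'.val = p.val ++ [d]
    | (Sum.inl p, Sum.inr d) => p.val.length = ℓ ∧ (p.last, d) ∈ I.role r w
    | (Sum.inr _, Sum.inl _) => False
    | (Sum.inr d, Sum.inr d') => (d, d') ∈ I.role r w

/-! Normal forms, over the finite signature N_C = {A_0,…,A_s}, N_R = {r_0,…,r_{t-1}}. -/

/-- Conjunction of a list of concepts (the empty conjunction is ⊤, encoded as
¬(A₀ ⊓ ¬A₀); it is never used since atom lists are nonempty). -/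
def bigConj (s t : ℕ) : List (DLConcept (Fin (s+1)) (Fin t)) → DLConcept (Fin (s+1)) (Fin t)
  | [] => .neg (.and (.atom 0) (.neg (.atom 0)))
  | [C] => C
  | C :: D :: L => .and C (bigConj s t (D :: L))

/-- Disjunction of a list of concepts (the empty disjunction is ⊥ = A₀ ⊓ ¬A₀). -/
def bigDisj (s t : ℕ) : List (DLConcept (Fin (s+1)) (Fin t)) → DLConcept (Fin (s+1)) (Fin t)
  | [] => .and (.atom 0) (.neg (.atom 0))
  | [C] => C
  | C :: D :: L => .neg (.and (.neg C) (.neg (bigDisj s t (D :: L))))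

/-- All lists obtained from a given list of atoms by choosing a sign
(nothing or negation) for each atom, in order. -/
def signedAll (s t : ℕ) :
    List (DLConcept (Fin (s+1)) (Fin t)) → List (List (DLConcept (Fin (s+1)) (Fin t)))
  | [] => [[]]
  | B :: L =>
      ((signedAll s t L).map (fun T => B :: T)) ++
      ((signedAll s t L).map (fun T => DLConcept.neg B :: T))

/-- The atoms of rank k, given the list of normal forms of rank k−1:
at_k = N_C ∪ {∃r.C | C ∈ nf_{k−1}} ∪ {◇C | C ∈ nf_{k−1}} (in a fixed order). -/
def atomsOf (s t : ℕ) (prev : List (DLConcept (Fin (s+1)) (Fin t))) :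
    List (DLConcept (Fin (s+1)) (Fin t)) :=
  ((List.finRange (s+1)).map DLConcept.atom)
    ++ ((List.finRange t).flatMap (fun r => prev.map (DLConcept.ex r)))
    ++ (prev.map DLConcept.dia)

/-- The normal forms of rank k (as a list enumerating the set nf_k in a fixed
order): all signed conjunctions over the atoms of rank k, where nf_{−1} = ∅. -/
def nfList (s t : ℕ) : ℕ → List (DLConcept (Fin (s+1)) (Fin t))
  | 0 => (signedAll s t (atomsOf s t [])).map (bigConj s t)
  | k+1 => (signedAll s t (atomsOf s t (nfList s t k))).map (bigConj s t)

/-! The two-sorted correspondence language SL. -/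

/-- Formulas of the two-sorted first-order language SL (domain variables and
world variables are natural numbers; each predicate takes one extra
world-sort argument). -/
inductive SLForm (NC NR : Type) : Type where
  | conc : NC → ℕ → ℕ → SLForm NC NR        -- A(x, v)
  | role : NR → ℕ → ℕ → ℕ → SLForm NC NR    -- r(x, y, v)
  | eqD  : ℕ → ℕ → SLForm NC NR             -- x = y (domain sort)
  | eqW  : ℕ → ℕ → SLForm NC NR             -- v = u (world sort)
  | neg  : SLForm NC NR → SLForm NC NR
  | and  : SLForm NC NR → SLForm NC NR → SLForm NC NR
  | exD  : ℕ → SLForm NC NR → SLForm NC NR  -- ∃x (domain sort)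
  | exW  : ℕ → SLForm NC NR → SLForm NC NR  -- ∃v (world sort)

/-- Satisfaction for SL over S5-interpretations, with a domain valuation η and
a world valuation ξ. -/
def SLForm.Sat (I : S5Interp NC NR) : (ℕ → I.Δ) → (ℕ → I.W) → SLForm NC NR → Prop
  | η, ξ, .conc A x v   => η x ∈ I.conc A (ξ v)
  | η, ξ, .role r x y v => (η x, η y) ∈ I.role r (ξ v)
  | η, _, .eqD x y      => η x = η y
  | _, ξ, .eqW v u      => ξ v = ξ u
  | η, ξ, .neg φ        => ¬ SLForm.Sat I η ξ φ
  | η, ξ, .and φ ψ      => SLForm.Sat I η ξ φ ∧ SLForm.Sat I η ξ ψ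
  | η, ξ, .exD x φ      => ∃ d, SLForm.Sat I (Function.update η x d) ξ φ
  | η, ξ, .exW v φ      => ∃ u, SLForm.Sat I η (Function.update ξ v u) φ

/-- Free domain-sort variables of an SL formula. -/
def SLForm.freeDVars : SLForm NC NR → Set ℕ
  | .conc _ x _   => {x}
  | .role _ x y _ => {x, y}
  | .eqD x y      => {x, y}
  | .eqW _ _      => ∅
  | .neg φ        => φ.freeDVars
  | .and φ ψ      => φ.freeDVars ∪ ψ.freeDVars
  | .exD x φ      => φ.freeDVars \ {x}
  | .exW _ φ      => φ.freeDVars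

/-- Free world-sort variables of an SL formula. -/
def SLForm.freeWVars : SLForm NC NR → Set ℕ
  | .conc _ _ v   => {v}
  | .role _ _ _ v => {v}
  | .eqD _ _      => ∅
  | .eqW v u      => {v, u}
  | .neg φ        => φ.freeWVars
  | .and φ ψ      => φ.freeWVars ∪ ψ.freeWVars
  | .exD _ φ      => φ.freeWVars
  | .exW v φ      => φ.freeWVars \ {v}

/-- The translation (−)^{†_v} of S5_FOL into SL: predicates get the world
variable v as extra argument, and □ becomes universal quantification over v. -/
def dagger (v : ℕ) : FOForm NC NR → SLForm NC NR
  | .conc A x   => .conc A x v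
  | .role r x y => .role r x y v
  | .eq x y     => .eqD x y
  | .neg φ      => .neg (dagger v φ)
  | .and φ ψ    => .and (dagger v φ) (dagger v ψ)
  | .ex x φ     => .exD x (dagger v φ)
  | .box φ      => .neg (.exW v (.neg (dagger v φ)))

/-! The radius-`ℓ` neighbourhood of the root in a tree unravelling consists of the paths of length
at most `ℓ`. In a play on two such neighbourhoods every role step must lead away from the root, so
at most `ℓ` role steps occur, while consecutive moves in the world component collapse to a single
one. An arbitrarily long play is thus governed by `ℓ` rounds of the alternating game, each of them
costing at most two moves of the ordinary game, plus one last move between worlds: this is the bound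
`2ℓ + 1`. -/

theorem isChain_cons_append_singleton {α : Type*} {R : α → α → Prop} {a b : α} {l : List α} :
    List.IsChain R (a :: (l ++ [b])) ↔
      List.IsChain R (a :: l) ∧ R ((a :: l).getLast (List.cons_ne_nil a l)) b := by
  rw [← List.cons_append, List.isChain_append]
  simp [List.getLast?_eq_getLast_of_ne_nil]

section Games

variable {I J : S5Interp NC NR} {n : ℕ} {w : I.W} {d : I.Δ} {v : J.W} {e : J.Δ}

theorem AltAtom.symm (h : AltAtom I J w d v e) : AltAtom J I v e w d :=
  fun A => (h A).symm

theorem AltDelta.symm {P : I.W → I.Δ → J.W → J.Δ → Prop} (h : AltDelta I J P w d v e) :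
    AltDelta J I (fun v e w d => P w d v e) v e w d :=
  And.symm h

theorem AltDelta.mono {P Q : I.W → I.Δ → J.W → J.Δ → Prop}
    (hPQ : ∀ ⦃w d v e⦄, P w d v e → Q w d v e) (h : AltDelta I J P w d v e) :
    AltDelta I J Q w d v e :=
  ⟨fun r d' hd => (h.1 r d' hd).imp fun _ => .imp_right (@hPQ _ _ _ _),
    fun r e' he => (h.2 r e' he).imp fun _ => .imp_right (@hPQ _ _ _ _)⟩

namespace BisimAtDepth

theorem altAtom (h : BisimAtDepth I J n w d v e) : AltAtom I J w d v e := by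
  cases n with
  | zero => exact h
  | succ n => exact h.1

theorem altDelta (h : BisimAtDepth I J (n + 1) w d v e) :
    AltDelta I J (BisimAtDepth I J n) w d v e :=
  h.2.2.2

theorem of_succ (h : BisimAtDepth I J (n + 1) w d v e) : BisimAtDepth I J n w d v e := by
  induction n generalizing w d v e with
  | zero => exact h.altAtom
  | succ n ih =>
    exact ⟨h.altAtom, fun w' => (h.2.1 w').imp fun _ => ih, fun v' => (h.2.2.1 v').imp fun _ => ih,
      h.altDelta.mono fun _ _ _ _ => ih⟩

theorem altBisim (h : BisimAtDepth I J (2 * n + 1) w d v e) : AltBisim I J n w d v e := by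
  induction n generalizing w d v e with
  | zero =>
    exact ⟨h.altAtom, fun w' => (h.2.1 w').imp fun _ => altAtom,
      fun v' => (h.2.2.1 v').imp fun _ => altAtom⟩
  | succ n ih =>
    have round : ∀ {w v}, BisimAtDepth I J (2 * (n + 1)) w d v e →
        AltAtom I J w d v e ∧ AltDelta I J (AltBisim I J n) w d v e :=
      fun hwv => ⟨hwv.altAtom, hwv.altDelta.mono fun _ _ _ _ => ih⟩
    exact ⟨h.altAtom, (round h.of_succ).2, fun w' => (h.2.1 w').imp fun _ => round,
      fun v' => (h.2.2.1 v').imp fun _ => round⟩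

end BisimAtDepth

namespace AltBisim

theorem altAtom (h : AltBisim I J n w d v e) : AltAtom I J w d v e := by
  cases n with
  | zero => exact h.1
  | succ n => exact h.1

theorem altDelta (h : AltBisim I J (n + 1) w d v e) : AltDelta I J (AltBisim I J n) w d v e :=
  h.2.1

theorem symm (h : AltBisim I J n w d v e) : AltBisim J I n v e w d := by
  induction n generalizing w d v e with
  | zero =>
    exact ⟨h.1.symm, fun v' => (h.2.2 v').imp fun _ => AltAtom.symm,
      fun w' => (h.2.1 w').imp fun _ => AltAtom.symm⟩
  | succ n ih =>
    have round_symm : ∀ {w v},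
        AltAtom I J w d v e ∧ AltDelta I J (AltBisim I J n) w d v e →
          AltAtom J I v e w d ∧ AltDelta J I (AltBisim J I n) v e w d :=
      fun ⟨hatom, hdelta⟩ => ⟨hatom.symm, hdelta.symm.mono fun _ _ _ _ => ih⟩
    have hcurrent := round_symm ⟨h.altAtom, h.altDelta⟩
    exact ⟨hcurrent.1, hcurrent.2, fun v' => (h.2.2.2 v').imp fun _ => round_symm,
      fun w' => (h.2.2.1 w').imp fun _ => round_symm⟩

/-- The conditions on moves between worlds do not mention the current worlds, so they persist after
such a move. -/
theorem exists_world (h : AltBisim I J n w d v e) (w' : I.W) :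
    ∃ v', AltBisim I J n w' d v' e := by
  cases n with
  | zero => exact (h.2.1 w').imp fun _ ha => ⟨ha, h.2⟩
  | succ n => exact (h.2.2.1 w').imp fun _ hround => ⟨hround.1, hround.2, h.2.2⟩

end AltBisim

end Games

namespace UPath

variable {I : S5Interp NC NR} {d0 : I.Δ}

/-- The path of length zero, which is the root of the tree unravelling `I*_{d₀}`. -/
def root (I : S5Interp NC NR) (d0 : I.Δ) : UPath I d0 :=
  ⟨[], List.IsChain.singleton d0⟩

/-- The extension of a path by one role step, i.e. a child of `p` in the tree unravelling. -/
def snoc (p : UPath I d0) (a : I.Δ) (h : roleStep I p.last a) : UPath I d0 :=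
  ⟨p.val ++ [a], isChain_cons_append_singleton.2 ⟨p.property, h⟩⟩

@[simp]
theorem last_snoc {p : UPath I d0} {a : I.Δ} (h : roleStep I p.last a) :
    (p.snoc a h).last = a := by
  simp [last, snoc]

@[simp]
theorem length_snoc {p : UPath I d0} {a : I.Δ} (h : roleStep I p.last a) :
    (p.snoc a h).val.length = p.val.length + 1 := by
  simp [snoc]

theorem ne_snoc {p : UPath I d0} {a : I.Δ} (h : roleStep I p.last a) : p ≠ p.snoc a h := by
  intro hp
  have hlen := congrArg (fun q : UPath I d0 => q.val.length) hp
  simp at hlen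

theorem eq_root_or_eq_snoc (p : UPath I d0) :
    p = root I d0 ∨ ∃ (q : UPath I d0) (a : I.Δ) (h : roleStep I q.last a), p = q.snoc a h := by
  obtain ⟨l, hl⟩ := p
  rcases List.eq_nil_or_concat' l with rfl | ⟨l, a, rfl⟩
  · exact .inl rfl
  · obtain ⟨hchain, hstep⟩ := isChain_cons_append_singleton.1 hl
    exact .inr ⟨⟨l, hchain⟩, a, hstep, rfl⟩

end UPath

section Unravelling

variable {I : S5Interp NC NR}

theorem roleStep_of_mem_role {r : NR} {w : I.W} {a b : I.Δ} (h : (a, b) ∈ I.role r w) :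
    roleStep I a b :=
  ⟨r, w, h⟩

theorem mem_role_unravel_iff {d0 : I.Δ} {r : NR} {w : I.W} {p q : UPath I d0} :
    (p, q) ∈ (I.unravel d0).role r w ↔
      ∃ (a : I.Δ) (h : (p.last, a) ∈ I.role r w), q = p.snoc a (roleStep_of_mem_role h) :=
  exists_congr fun _ =>
    ⟨fun ⟨hrole, hq⟩ => ⟨hrole, Subtype.ext hq⟩,
      fun ⟨hrole, hq⟩ => ⟨hrole, congrArg Subtype.val hq⟩⟩

theorem bisimilar_unravel (I : S5Interp NC NR) (w : I.W) (d : I.Δ) :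
    Bisimilar I (I.unravel d) w d w (UPath.root I d) := by
  refine ⟨fun a b => a = (b.1, UPath.last b.2), ?_, rfl⟩
  rintro _ _ w p ⟨⟩
  refine ⟨fun A => Iff.rfl, fun w' => ⟨w', rfl⟩, fun w' => ⟨w', rfl⟩, fun r a ha => ?_,
    fun r q hq => ?_⟩
  · have hstep := roleStep_of_mem_role ha
    exact ⟨UPath.snoc p a hstep, mem_role_unravel_iff.2 ⟨a, ha, rfl⟩,
      congrArg _ (UPath.last_snoc hstep).symm⟩
  · obtain ⟨a, ha, rfl⟩ := mem_role_unravel_iff.1 hq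
    exact ⟨a, ha, congrArg _ (UPath.last_snoc (roleStep_of_mem_role ha)).symm⟩

theorem gaifmanAdj_unravel_iff {d0 : I.Δ} {p q : UPath I d0} :
    GaifmanAdj (I.unravel d0) p q ↔ (∃ a h, q = p.snoc a h) ∨ ∃ a h, p = q.snoc a h := by
  constructor
  · rintro ⟨-, r, w, hpq | hqp⟩
    · obtain ⟨a, ha, hq⟩ := mem_role_unravel_iff.1 hpq
      exact .inl ⟨a, ⟨r, w, ha⟩, hq⟩
    · obtain ⟨a, ha, hp⟩ := mem_role_unravel_iff.1 hqp
      exact .inr ⟨a, ⟨r, w, ha⟩, hp⟩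
  · rintro (⟨a, ⟨r, w, ha⟩, rfl⟩ | ⟨a, ⟨r, w, ha⟩, rfl⟩)
    · exact ⟨UPath.ne_snoc (roleStep_of_mem_role ha), r, w,
        .inl (mem_role_unravel_iff.2 ⟨a, ha, rfl⟩)⟩
    · exact ⟨(UPath.ne_snoc (roleStep_of_mem_role ha)).symm, r, w,
        .inr (mem_role_unravel_iff.2 ⟨a, ha, rfl⟩)⟩

theorem mem_gaifmanBall_unravel_iff {d0 : I.Δ} {ℓ : ℕ} {p : UPath I d0} :
    p ∈ GaifmanBall (I.unravel d0) (UPath.root I d0) ℓ ↔ p.val.length ≤ ℓ := by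
  induction ℓ generalizing p with
  | zero =>
    rw [Nat.le_zero, List.length_eq_zero_iff]
    exact Subtype.ext_iff
  | succ ℓ ih =>
    constructor
    · rintro (hp | ⟨q, hq, hadj⟩)
      · exact (ih.1 hp).trans ℓ.le_succ
      · have hq_length := ih.1 hq
        rcases gaifmanAdj_unravel_iff.1 hadj with ⟨a, h, rfl⟩ | ⟨a, h, rfl⟩
        · exact (UPath.length_snoc h).trans_le (Nat.succ_le_succ hq_length)
        · rw [UPath.length_snoc] at hq_length
          omega
    · intro hp
      rcases p.eq_root_or_eq_snoc with rfl | ⟨q, a, h, rfl⟩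
      · exact mem_gaifmanBall_self _ _ _
      · rw [UPath.length_snoc, Nat.add_le_add_iff_right] at hp
        exact .inr ⟨q, ih.2 hp, gaifmanAdj_unravel_iff.2 (.inl ⟨a, h, rfl⟩)⟩

end Unravelling

/-- Duplicator's winning positions in the bisimulation game between the radius-`ℓ` neighbourhoods
of the roots of `I*_d` and `J*_e`: paths of the same length `ℓ - k` whose last entries are
equivalent in the `k`-round alternating game. Stating the lengths additively avoids truncated
subtraction. -/
def AltBisimPaths (I J : S5Interp NC NR) (d : I.Δ) (e : J.Δ) (ℓ : ℕ)
    (w : I.W) (p : UPath I d) (v : J.W) (q : UPath J e) : Prop :=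
  ∃ k, p.val.length + k = ℓ ∧ q.val.length + k = ℓ ∧ AltBisim I J k w p.last v q.last

namespace AltBisimPaths

variable {I J : S5Interp NC NR} {d : I.Δ} {e : J.Δ} {ℓ : ℕ}
  {w : I.W} {p : UPath I d} {v : J.W} {q : UPath J e}

theorem altAtom (h : AltBisimPaths I J d e ℓ w p v q) : AltAtom I J w p.last v q.last :=
  let ⟨_, _, _, hk⟩ := h
  hk.altAtom

theorem length_right_le (h : AltBisimPaths I J d e ℓ w p v q) : q.val.length ≤ ℓ :=
  let ⟨_, _, hq, _⟩ := h
  Nat.le.intro hq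

theorem symm (h : AltBisimPaths I J d e ℓ w p v q) : AltBisimPaths J I e d ℓ v q w p :=
  let ⟨k, hp, hq, hk⟩ := h
  ⟨k, hq, hp, hk.symm⟩

theorem exists_world (h : AltBisimPaths I J d e ℓ w p v q) (w' : I.W) :
    ∃ v', AltBisimPaths I J d e ℓ w' p v' q :=
  let ⟨k, hp, hq, hk⟩ := h
  (hk.exists_world w').imp fun _ hk' => ⟨k, hp, hq, hk'⟩

theorem exists_role (h : AltBisimPaths I J d e ℓ w p v q) {r : NR} {p' : UPath I d}
    (hrole : (p, p') ∈ (I.unravel d).role r w) (hp' : p'.val.length ≤ ℓ) :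
    ∃ q' : UPath J e, (q, q') ∈ (J.unravel e).role r v ∧ AltBisimPaths I J d e ℓ w p' v q' := by
  obtain ⟨a, ha, rfl⟩ := mem_role_unravel_iff.1 hrole
  rw [UPath.length_snoc] at hp'
  obtain ⟨k, hp, hq, hk⟩ := h
  obtain ⟨k, rfl⟩ := Nat.exists_eq_add_one_of_ne_zero (show k ≠ 0 by omega)
  obtain ⟨b, hb, hab⟩ := hk.altDelta.1 r a ha
  refine ⟨q.snoc b (roleStep_of_mem_role hb), mem_role_unravel_iff.2 ⟨b, hb, rfl⟩, k, ?_, ?_, ?_⟩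
  · rw [UPath.length_snoc]
    omega
  · rw [UPath.length_snoc]
    omega
  · rwa [UPath.last_snoc, UPath.last_snoc]

end AltBisimPaths

/-- The neighbourhood of radius `ℓ` of the root in the tree unravelling `I*_d`. -/
abbrev S5Interp.unravelBall (I : S5Interp NC NR) (d : I.Δ) (ℓ : ℕ) : S5Interp NC NR :=
  (I.unravel d).ballRestrict (UPath.root I d) ℓ

/-- The root of the tree unravelling `I*_d`, viewed inside its neighbourhood of radius `ℓ`. -/
abbrev S5Interp.unravelBallRoot (I : S5Interp NC NR) (d : I.Δ) (ℓ : ℕ) : (I.unravelBall d ℓ).Δ :=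
  (I.unravel d).ballPt (UPath.root I d) ℓ

theorem AltBisim.bisimilar_unravelBall {I J : S5Interp NC NR} {ℓ : ℕ} {w : I.W} {d : I.Δ}
    {v : J.W} {e : J.Δ} (h : AltBisim I J ℓ w d v e) :
    Bisimilar (I.unravelBall d ℓ) (J.unravelBall e ℓ)
      w (I.unravelBallRoot d ℓ) v (J.unravelBallRoot e ℓ) := by
  refine ⟨fun a b => AltBisimPaths I J d e ℓ a.1 a.2.val b.1 b.2.val, ?_,
    ℓ, Nat.zero_add ℓ, Nat.zero_add ℓ, h⟩
  rintro w ⟨p, hp⟩ v ⟨q, hq⟩ hpq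
  refine ⟨hpq.altAtom, hpq.exists_world,
    fun v' => (hpq.symm.exists_world v').imp fun _ => AltBisimPaths.symm, ?_, ?_⟩
  · rintro r ⟨p', hp'⟩ hrole
    obtain ⟨q', hrole', hpq'⟩ := hpq.exists_role hrole (mem_gaifmanBall_unravel_iff.1 hp')
    exact ⟨⟨q', mem_gaifmanBall_unravel_iff.2 hpq'.length_right_le⟩, hrole', hpq'⟩
  · rintro r ⟨q', hq'⟩ hrole
    obtain ⟨p', hrole', hqp'⟩ := hpq.symm.exists_role hrole (mem_gaifmanBall_unravel_iff.1 hq')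
    exact ⟨⟨p', mem_gaifmanBall_unravel_iff.2 hqp'.length_right_le⟩, hrole', hqp'.symm⟩

theorem sat_iff_sat_unravelBall {φ : FOForm NC NR} {x ℓ : ℕ} (hinv : BisimInvariant φ x)
    (hloc : IsLocal φ x ℓ) {I : S5Interp NC NR} {w : I.W} {d : I.Δ} {η : ℕ → I.Δ} (hη : η x = d) :
    FOForm.Sat I w η φ ↔
      FOForm.Sat (I.unravelBall d ℓ) w (fun _ => I.unravelBallRoot d ℓ) φ :=
  calc FOForm.Sat I w η φ
    _ ↔ FOForm.Sat (I.unravel d) w (fun _ => UPath.root I d) φ :=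
      hinv _ _ _ _ _ _ (bisimilar_unravel I w d) _ _ hη rfl
    _ ↔ FOForm.Sat (I.unravelBall d ℓ) w (fun _ => I.unravelBallRoot d ℓ) φ :=
      hloc _ _ _ _ _ rfl rfl

theorem local_to_depth_invariant_general {φ : FOForm NC NR} {x ℓ : ℕ}
    (hinv : BisimInvariant φ x) (hloc : IsLocal φ x ℓ)
    {I J : S5Interp NC NR} {w : I.W} {d : I.Δ} {v : J.W} {e : J.Δ}
    (h : AltBisim I J ℓ w d v e)
    {η : ℕ → I.Δ} {θ : ℕ → J.Δ} (hη : η x = d) (hθ : θ x = e) :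
    FOForm.Sat I w η φ ↔ FOForm.Sat J v θ φ := by
  rw [sat_iff_sat_unravelBall hinv hloc hη, sat_iff_sat_unravelBall hinv hloc hθ]
  exact hinv _ _ _ _ _ _ h.bisimilar_unravelBall _ _ rfl rfl

/-- a bisimulation-invariant and ℓ-local formula with one free
variable is invariant under depth-(2ℓ+1) bisimilarity. -/
theorem local_to_depth_invariant (NC NR : Type) (φ : FOForm NC NR) (x ℓ : ℕ)
    (hfv : φ.freeVars ⊆ {x})
    (hinv : BisimInvariant φ x) (hloc : IsLocal φ x ℓ)
    (I J : S5Interp NC NR) (w : I.W) (d : I.Δ) (v : J.W) (e : J.Δ)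
    (h : BisimAtDepth I J (2 * ℓ + 1) w d v e)
    (η : ℕ → I.Δ) (θ : ℕ → J.Δ) (hη : η x = d) (hθ : θ x = e) :
    FOForm.Sat I w η φ ↔ FOForm.Sat J v θ φ :=
  local_to_depth_invariant_general hinv hloc h.altBisim hη hθ
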